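/- Let k, l ≥ 2 be integers, set n = kl, and assume n > 6. Then there exists a prime p not dividing E_n such that ν_p((k!)^l · l!) < ν_p(n!), where E_n := D_n + (−1)^{n−1}(n−1). -/

import Mathlib

/-!
Modulo `p` one has `E_n ≡ ± E_r` whenever `n ≡ r`, and `E_0, E_3, E_4, E_5 = 2, 4, 6, 48`. Hence
an odd prime dividing `n` does not divide `E_n`, and neither does a prime `p ≥ 5` dividing
`n - 3`, `n - 4` or `n - 5`.

Write `s` for the sum of the digits in base `p`. By Legendre's formula the desired inequality of
valuations says `s(kl) + l < l s(k) + s(l)`. Since `s(kl) ≤ s(k) s(l)`, it holds when `p ≤ l` and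
`k` is not a power of `p`; it also holds when `l < p` and a carry out of the last digit occurs in
`k + ⋯ + k`. Together these cover every prime `p ∤ k` with `n ≡ r (mod p)`, `r ≤ p` and `l ∤ r`.

For `n` odd, one of the consecutive numbers `n - 4` and `n - 3` has a prime factor `p ≥ 5`, as
`3 ^ j + 1` is not a power of two once it exceeds `4`. For `n` even, `p = 3` works if `l = 3`, and
otherwise any prime factor `p ≥ 5` of `n - 3` works. There remains `n = 3 ^ j + 3`, whose ternary
digit sum is `2`: again `p = 3` works unless `k` is a power of `3`, which forces `k = 3`; then
any prime factor of `n - 5` works.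
-/

open scoped Nat

section DigitSum

/-- The sum of the digits of `n` in base `b`. -/
def digitSum (b n : ℕ) : ℕ := (b.digits n).sum

@[simp]
lemma digitSum_zero_right (b : ℕ) : digitSum b 0 = 0 := by
  simp [digitSum]

lemma digitSum_le_self (b n : ℕ) : digitSum b n ≤ n := Nat.digit_sum_le b n

variable {b : ℕ}

lemma digitSum_add_base_mul (hb : 1 < b) {r : ℕ} (hr : r < b) (q : ℕ) :
    digitSum b (r + b * q) = r + digitSum b q := by
  by_cases h : r = 0 ∧ q = 0
  · simp [h.1, h.2]
  · rw [digitSum, Nat.digits_add b hb r q hr (by tauto), List.sum_cons, digitSum]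

lemma digitSum_eq_mod_add_digitSum_div (hb : 1 < b) (n : ℕ) :
    digitSum b n = n % b + digitSum b (n / b) := by
  conv_lhs => rw [← Nat.mod_add_div n b]
  exact digitSum_add_base_mul hb (Nat.mod_lt n (by omega)) _

lemma digitSum_base_mul (hb : 1 < b) (q : ℕ) : digitSum b (b * q) = digitSum b q := by
  simpa using digitSum_add_base_mul hb (by omega : 0 < b) q

lemma digitSum_of_lt (hb : 1 < b) {n : ℕ} (hn : n < b) : digitSum b n = n := by
  simpa using digitSum_add_base_mul hb hn 0

lemma digitSum_base_pow (hb : 1 < b) (i : ℕ) : digitSum b (b ^ i) = 1 := by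
  induction i with
  | zero => simpa using digitSum_of_lt hb hb
  | succ i ih => rw [pow_succ', digitSum_base_mul hb, ih]

lemma digitSum_lt_self (hb : 1 < b) {n : ℕ} (hn : b ≤ n) : digitSum b n < n := by
  have hq : 0 < n / b := Nat.div_pos hn (by omega)
  calc digitSum b n = n % b + digitSum b (n / b) := digitSum_eq_mod_add_digitSum_div hb n
    _ ≤ n % b + n / b := by gcongr; exact digitSum_le_self b _
    _ < n % b + b * (n / b) := by gcongr; exact lt_mul_of_one_lt_left hq hb
    _ = n := Nat.mod_add_div n b

lemma digitSum_pos (hb : 1 < b) {n : ℕ} (hn : n ≠ 0) : 0 < digitSum b n := by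
  induction n using Nat.strong_induction_on with
  | _ n ih =>
    rw [digitSum_eq_mod_add_digitSum_div hb n]
    rcases eq_or_ne (n / b) 0 with hq | hq
    · have := Nat.mod_add_div n b
      simp only [hq, mul_zero] at this
      omega
    · exact Nat.add_pos_right _ (ih _ (Nat.div_lt_self (by omega) hb) hq)

lemma two_le_digitSum (hb : 1 < b) {n : ℕ} (hn : n ≠ 0) (hpow : ∀ i, n ≠ b ^ i) :
    2 ≤ digitSum b n := by
  induction n using Nat.strong_induction_on with
  | _ n ih =>
    have hdecomp := Nat.mod_add_div n b
    rw [digitSum_eq_mod_add_digitSum_div hb n]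
    rcases eq_or_ne (n / b) 0 with hq | hq
    · have hne_one : n ≠ 1 := by simpa using hpow 0
      simp only [hq, mul_zero] at hdecomp
      omega
    rcases eq_or_ne (n % b) 0 with hr | hr
    · refine (ih _ (Nat.div_lt_self (by omega) hb) hq fun i hi ↦ hpow (i + 1) ?_).trans
        (Nat.le_add_left _ _)
      rw [pow_succ', ← hi]
      omega
    · have := digitSum_pos hb hq
      omega

lemma digitSum_succ_le (hb : 1 < b) (n : ℕ) : digitSum b (n + 1) ≤ digitSum b n + 1 := by
  induction n using Nat.strong_induction_on with
  | _ n ih =>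
    have hdecomp := Nat.mod_add_div n b
    have hr := Nat.mod_lt n (by omega : b > 0)
    rw [digitSum_eq_mod_add_digitSum_div hb n]
    rcases lt_or_ge (n % b + 1) b with hlt | hge
    · rw [show n + 1 = (n % b + 1) + b * (n / b) by omega, digitSum_add_base_mul hb hlt]
      omega
    · have hq := ih (n / b) (Nat.div_lt_self (by omega) hb)
      rw [show n + 1 = b * (n / b + 1) by rw [mul_add]; omega, digitSum_base_mul hb]
      omega

lemma digitSum_add_le (hb : 1 < b) (m n : ℕ) :
    digitSum b (m + n) ≤ digitSum b m + digitSum b n := by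
  induction m using Nat.strong_induction_on generalizing n with
  | _ m ih =>
    rcases eq_or_ne m 0 with rfl | hm
    · simp
    have ih_div := ih (m / b) (Nat.div_lt_self (by omega) hb)
    have hm_decomp := Nat.mod_add_div m b
    have hn_decomp := Nat.mod_add_div n b
    have hm_mod := Nat.mod_lt m (by omega : b > 0)
    have hn_mod := Nat.mod_lt n (by omega : b > 0)
    rw [digitSum_eq_mod_add_digitSum_div hb m, digitSum_eq_mod_add_digitSum_div hb n]
    rcases lt_or_ge (m % b + n % b) b with hlt | hge
    · have hsum : m + n = (m % b + n % b) + b * (m / b + n / b) := by rw [mul_add]; omega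
      rw [hsum, digitSum_add_base_mul hb hlt]
      have := ih_div (n / b)
      omega
    · have hsum : m + n = (m % b + n % b - b) + b * (m / b + (n / b + 1)) := by
        rw [mul_add, mul_add]; omega
      rw [hsum, digitSum_add_base_mul hb (by omega)]
      have := ih_div (n / b + 1)
      have := digitSum_succ_le hb (n / b)
      omega

lemma digitSum_mul_le_mul_digitSum (hb : 1 < b) (m n : ℕ) :
    digitSum b (m * n) ≤ m * digitSum b n := by
  induction m with
  | zero => simp
  | succ m ih =>
    rw [add_one_mul, add_one_mul]
    exact (digitSum_add_le hb _ _).trans (by gcongr)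

lemma digitSum_mul_le_mod_add_div (hb : 1 < b) (m n : ℕ) :
    digitSum b (m * n) ≤ digitSum b (m % b * n) + digitSum b (m / b * n) :=
  calc digitSum b (m * n) = digitSum b (m % b * n + b * (m / b * n)) := by
        rw [← mul_assoc, ← add_mul, Nat.mod_add_div]
    _ ≤ digitSum b (m % b * n) + digitSum b (b * (m / b * n)) := digitSum_add_le hb _ _
    _ = digitSum b (m % b * n) + digitSum b (m / b * n) := by rw [digitSum_base_mul hb]

lemma digitSum_mul_le (hb : 1 < b) (m n : ℕ) :
    digitSum b (m * n) ≤ digitSum b m * digitSum b n := by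
  induction m using Nat.strong_induction_on with
  | _ m ih =>
    rcases eq_or_ne m 0 with rfl | hm
    · simp
    calc digitSum b (m * n)
        ≤ digitSum b (m % b * n) + digitSum b (m / b * n) := digitSum_mul_le_mod_add_div hb m n
      _ ≤ m % b * digitSum b n + digitSum b (m / b) * digitSum b n :=
        add_le_add (digitSum_mul_le_mul_digitSum hb _ _)
          (ih _ (Nat.div_lt_self (by omega) hb))
      _ = digitSum b m * digitSum b n := by
        rw [← add_mul, ← digitSum_eq_mod_add_digitSum_div hb]

lemma digitSum_mul_lt_of_base_le (hb : 1 < b) {m n : ℕ} (h : b ≤ m % b * n) :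
    digitSum b (m * n) < digitSum b m * n :=
  calc digitSum b (m * n)
      ≤ digitSum b (m % b * n) + digitSum b (m / b * n) := digitSum_mul_le_mod_add_div hb m n
    _ < m % b * n + n * digitSum b (m / b) := by
      refine add_lt_add_of_lt_of_le (digitSum_lt_self hb h) ?_
      rw [mul_comm (m / b)]
      exact digitSum_mul_le_mul_digitSum hb _ _
    _ = digitSum b m * n := by rw [digitSum_eq_mod_add_digitSum_div hb m]; ring

end DigitSum

section Valuation

variable {p k l : ℕ}

lemma sub_one_mul_padicValNat_factorial_add_digitSum (hp : p.Prime) (n : ℕ) :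
    (p - 1) * padicValNat p n ! + digitSum p n = n := by
  have := Fact.mk hp
  rw [sub_one_mul_padicValNat_factorial, ← digitSum]
  exact Nat.sub_add_cancel (digitSum_le_self p n)

lemma padicValNat_factorial_pow_mul_lt_of_digitSum (hp : p.Prime)
    (h : digitSum p (k * l) + l < l * digitSum p k + digitSum p l) :
    padicValNat p (k ! ^ l * l !) < padicValNat p (k * l)! := by
  have := Fact.mk hp
  have hk : l * ((p - 1) * padicValNat p k ! + digitSum p k) = l * k := by
    rw [sub_one_mul_padicValNat_factorial_add_digitSum hp k]
  have hl := sub_one_mul_padicValNat_factorial_add_digitSum hp l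
  have hkl := sub_one_mul_padicValNat_factorial_add_digitSum hp (k * l)
  rw [padicValNat.mul (by positivity) (by positivity), padicValNat.pow]
  refine lt_of_mul_lt_mul_left (a := p - 1) ?_ (Nat.zero_le _)
  linarith

lemma padicValNat_factorial_pow_mul_lt_of_le (hp : p.Prime) (hk : k ≠ 0)
    (hpow : ∀ i, k ≠ p ^ i) (hpl : p ≤ l) :
    padicValNat p (k ! ^ l * l !) < padicValNat p (k * l)! := by
  apply padicValNat_factorial_pow_mul_lt_of_digitSum hp
  have hsk := two_le_digitSum hp.one_lt hk hpow
  have hsl := digitSum_lt_self hp.one_lt hpl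
  have hskl := digitSum_mul_le hp.one_lt k l
  -- The gap is at least `(s(k) - 1) * (l - s(l))`.
  nlinarith

lemma base_le_mod_mul_of_modEq {r : ℕ} (hpk : ¬ p ∣ k) (hl : l ≠ 0) (hlr : ¬ l ∣ r)
    (hrp : r ≤ p) (hmod : k * l ≡ r [MOD p]) : p ≤ k % p * l := by
  by_contra! hlt
  have hmod' : k % p * l ≡ r [MOD p] := ((Nat.mod_modEq k p).mul_right l).trans hmod
  rcases hrp.lt_or_eq with hr | rfl
  · exact hlr (hmod'.eq_of_lt_of_lt hlt hr ▸ dvd_mul_left l _)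
  · have hzero : k % r * l = 0 := Nat.eq_zero_of_dvd_of_lt
      ((Nat.modEq_zero_iff_dvd).1 (hmod'.trans (by simp [Nat.ModEq]))) hlt
    exact hpk (Nat.dvd_of_mod_eq_zero ((mul_eq_zero.1 hzero).resolve_right hl))

lemma padicValNat_factorial_pow_mul_lt_of_modEq {r : ℕ} (hp : p.Prime) (hk : k ≠ 1)
    (hpk : ¬ p ∣ k) (hl : l ≠ 0) (hlr : ¬ l ∣ r) (hrp : r ≤ p) (hmod : k * l ≡ r [MOD p]) :
    padicValNat p (k ! ^ l * l !) < padicValNat p (k * l)! := by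
  rcases lt_or_ge l p with hlp | hpl
  · apply padicValNat_factorial_pow_mul_lt_of_digitSum hp
    have hcarry := digitSum_mul_lt_of_base_le hp.one_lt
      (base_le_mod_mul_of_modEq hpk hl hlr hrp hmod)
    rw [digitSum_of_lt hp.one_lt hlp, mul_comm l]
    omega
  · refine padicValNat_factorial_pow_mul_lt_of_le hp (fun h ↦ hpk (h ▸ dvd_zero p)) ?_ hpl
    rintro i rfl
    exact hpk (dvd_pow_self p fun hi ↦ hk (by rw [hi, pow_zero]))

end Valuation

section Derangements

/-- The integer `E_n = D_n + (-1) ^ (n - 1) * (n - 1)`, twice the number of derangements in the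
alternating group. The sign is written without `n - 1`, so that `E_0 = 2` is not affected by
truncated subtraction. -/
def twiceEvenDerangements (n : ℕ) : ℤ := numDerangements n - (-1) ^ n * ((n : ℤ) - 1)

lemma twiceEvenDerangements_of_ne_zero {n : ℕ} (hn : n ≠ 0) :
    twiceEvenDerangements n = numDerangements n + (-1) ^ (n - 1) * ((n : ℤ) - 1) := by
  obtain ⟨m, rfl⟩ := Nat.exists_eq_succ_of_ne_zero hn
  rw [twiceEvenDerangements, Nat.succ_sub_one, pow_succ]
  ring

lemma numDerangements_add_modEq (m r : ℕ) :
    (numDerangements (m + r) : ℤ) ≡ (-1) ^ m * numDerangements r [ZMOD m] := by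
  induction r with
  | zero =>
    cases m with
    | zero => rfl
    | succ m =>
      rw [add_zero, numDerangements_succ, Int.modEq_comm, Int.modEq_iff_dvd]
      exact ⟨numDerangements m, by push_cast; simp; ring⟩
  | succ r ih =>
    rw [← add_assoc, numDerangements_succ, numDerangements_succ]
    have hcoeff : ((m + r : ℕ) + 1 : ℤ) ≡ r + 1 [ZMOD m] := by
      simp [Int.modEq_iff_dvd]
    convert! (hcoeff.mul ih).sub_right ((-1) ^ (m + r)) using 1
    ring

lemma twiceEvenDerangements_add_modEq (m r : ℕ) :
    twiceEvenDerangements (m + r) ≡ (-1) ^ m * twiceEvenDerangements r [ZMOD m] := by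
  have hcoeff : ((m + r : ℕ) - 1 : ℤ) ≡ r - 1 [ZMOD m] := by
    simp [Int.modEq_iff_dvd]
  convert! (numDerangements_add_modEq m r).sub (hcoeff.mul_left ((-1) ^ (m + r))) using 1
  rw [twiceEvenDerangements]
  ring

lemma dvd_twiceEvenDerangements_iff_of_modEq {p n r : ℕ} (h : n ≡ r [MOD p]) :
    (p : ℤ) ∣ twiceEvenDerangements n ↔ (p : ℤ) ∣ twiceEvenDerangements r := by
  wlog hrn : r ≤ n generalizing n r
  · exact (this h.symm (le_of_not_ge hrn)).symm
  obtain ⟨m, rfl⟩ := Nat.exists_eq_add_of_le' hrn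
  have hpm : p ∣ m := by simpa using (Nat.modEq_iff_dvd' hrn).1 h.symm
  have hmod := (twiceEvenDerangements_add_modEq m r).of_dvd (Int.natCast_dvd_natCast.2 hpm)
  rw [hmod.dvd_iff, (isUnit_neg_one.pow m).dvd_mul_left]

lemma not_dvd_twiceEvenDerangements_of_dvd {p n : ℕ} (hp : 2 < p) (hpn : p ∣ n) :
    ¬ (p : ℤ) ∣ twiceEvenDerangements n := by
  rw [dvd_twiceEvenDerangements_iff_of_modEq (Nat.modEq_zero_iff_dvd.2 hpn)]
  exact fun h ↦ absurd (Int.le_of_dvd (by decide) h) (by simpa [twiceEvenDerangements] using hp)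

lemma not_dvd_twiceEvenDerangements_of_modEq {p n r : ℕ} (hp : p.Prime) (hp5 : 5 ≤ p)
    (hr : r ∈ Finset.Icc 3 5) (hmod : n ≡ r [MOD p]) :
    ¬ (p : ℤ) ∣ twiceEvenDerangements n := by
  rw [dvd_twiceEvenDerangements_iff_of_modEq hmod]
  intro hdvd
  -- `E_3 = 4`, `E_4 = 6` and `E_5 = 48` all divide `2 ^ 4 * 3`.
  have hdvd48 : twiceEvenDerangements r ∣ ((2 ^ 4 * 3 : ℕ) : ℤ) := by
    clear hdvd hmod
    decide +revert
  rcases hp.dvd_mul.1 (Int.natCast_dvd_natCast.1 (hdvd.trans hdvd48)) with h | h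
  · have := Nat.le_of_dvd two_pos (hp.dvd_of_dvd_pow h)
    omega
  · have := Nat.le_of_dvd three_pos h
    omega

end Derangements

section PrimeFactors

lemma eq_pow_or_exists_prime_ne_dvd (q : ℕ) {m : ℕ} (hm : m ≠ 0) :
    (∃ i, m = q ^ i) ∨ ∃ p, p.Prime ∧ p ≠ q ∧ p ∣ m := by
  by_contra! h
  exact h.1 _ (Nat.eq_prime_pow_of_unique_prime_dvd hm fun {p} hp hpm ↦
    by_contra fun hpq ↦ h.2 p hp hpq hpm)

lemma three_pow_add_one_ne_two_pow {j : ℕ} (hj : 2 ≤ j) (c : ℕ) : 3 ^ j + 1 ≠ 2 ^ c := by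
  have hmod8 : ∀ i, 3 ^ i % 8 = 1 ∨ 3 ^ i % 8 = 3 := fun i ↦ by
    induction i with
    | zero => simp
    | succ i ih => rw [pow_succ]; omega
  intro h
  have h9 : 3 ^ 2 ≤ 3 ^ j := Nat.pow_le_pow_right three_pos hj
  have hc : 3 ≤ c := by
    by_contra! hc
    have : 2 ^ c ≤ 2 ^ 2 := Nat.pow_le_pow_right two_pos (by omega)
    omega
  have h8 : 2 ^ 3 ∣ 2 ^ c := pow_dvd_pow 2 hc
  have := hmod8 j
  omega

end PrimeFactors

section SeparatingPrime

variable {k l p : ℕ}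

/-- `p` is a prime, not dividing `E_{kl}`, whose valuation separates the order of the imprimitive
wreath product `S_k ≀ S_l` from that of `S_{kl}`. -/
def IsSeparatingPrime (k l p : ℕ) : Prop :=
  p.Prime ∧ ¬ (p : ℤ) ∣ twiceEvenDerangements (k * l) ∧
    padicValNat p (k ! ^ l * l !) < padicValNat p (k * l)!

lemma isSeparatingPrime_of_modEq {r : ℕ} (hp : p.Prime) (hp5 : 5 ≤ p) (hr : r ∈ Finset.Icc 3 5)
    (hmod : k * l ≡ r [MOD p]) (hk : k ≠ 1) (hpk : ¬ p ∣ k) (hl : l ≠ 0) (hlr : ¬ l ∣ r) :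
    IsSeparatingPrime k l p :=
  ⟨hp, not_dvd_twiceEvenDerangements_of_modEq hp hp5 hr hmod,
    padicValNat_factorial_pow_mul_lt_of_modEq hp hk hpk hl hlr
      ((Finset.mem_Icc.1 hr).2.trans hp5) hmod⟩

lemma isSeparatingPrime_of_dvd_sub {r : ℕ} (hp : p.Prime) (hp5 : 5 ≤ p)
    (hr : r ∈ Finset.Ico 3 5) (hrn : r ≤ k * l) (hdvd : p ∣ k * l - r) (hk : k ≠ 1)
    (hlr : ¬ l ∣ r) : IsSeparatingPrime k l p := by
  have hmod : k * l ≡ r [MOD p] := ((Nat.modEq_iff_dvd' hrn).2 hdvd).symm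
  obtain ⟨hr3, hr5⟩ := Finset.mem_Ico.1 hr
  have hpk : ¬ p ∣ k := fun h ↦ by
    have := Nat.le_of_dvd (by omega) ((hmod.dvd_iff dvd_rfl).1 (h.mul_right l))
    omega
  have hl : l ≠ 0 := by
    rintro rfl
    omega
  exact isSeparatingPrime_of_modEq hp hp5 (Finset.mem_Icc.2 ⟨hr3, hr5.le⟩) hmod hk hpk hl hlr

lemma isSeparatingPrime_three_of_even (hk : k ≠ 0) (hk2 : Even k) : IsSeparatingPrime k 3 3 := by
  refine ⟨Nat.prime_three, not_dvd_twiceEvenDerangements_of_dvd (by norm_num) (dvd_mul_left 3 k),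
    padicValNat_factorial_pow_mul_lt_of_le Nat.prime_three hk ?_ le_rfl⟩
  rintro i rfl
  exact Nat.not_odd_iff_even.2 hk2 (Odd.pow (by decide))

lemma isSeparatingPrime_three_of_eq_three_pow_add_three {j : ℕ} (hj : j ≠ 0)
    (hpow : ∀ i, k ≠ 3 ^ i) (hl : l ≠ 1) (h : k * l = 3 ^ j + 3) :
    IsSeparatingPrime k l 3 := by
  obtain ⟨hk, hl0⟩ : k ≠ 0 ∧ l ≠ 0 := mul_ne_zero_iff.1 (h.trans_ne (Nat.succ_ne_zero _))
  have h3 : 3 ∣ k * l := h ▸ (dvd_pow_self 3 hj).add dvd_rfl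
  refine ⟨Nat.prime_three, not_dvd_twiceEvenDerangements_of_dvd (by norm_num) h3,
    padicValNat_factorial_pow_mul_lt_of_digitSum Nat.prime_three ?_⟩
  have hsk : 2 ≤ digitSum 3 k := two_le_digitSum (by norm_num) hk hpow
  have hsl : 0 < digitSum 3 l := digitSum_pos (by norm_num) hl0
  have hskl : digitSum 3 (k * l) ≤ 2 :=
    calc digitSum 3 (k * l) = digitSum 3 (3 ^ j + 3 ^ 1) := by rw [h, pow_one]
      _ ≤ digitSum 3 (3 ^ j) + digitSum 3 (3 ^ 1) := digitSum_add_le (by norm_num) _ _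
      _ = 2 := by simp only [digitSum_base_pow (by norm_num : 1 < 3)]
  have hl2 : 2 ≤ l := by omega
  nlinarith

lemma eq_three_of_three_pow_mul_eq {a j : ℕ} (ha : a ≠ 0) (hj : 2 ≤ j)
    (h : 3 ^ a * l = 3 ^ j + 3) : 3 ^ a = 3 := by
  suffices a < 2 by rw [show a = 1 by omega, pow_one]
  by_contra! ha2
  have h9 : 3 ^ 2 ∣ 3 ^ j + 3 := h ▸ (pow_dvd_pow 3 ha2).mul_right l
  have : 3 ^ 2 ∣ 3 := (Nat.dvd_add_right (pow_dvd_pow 3 hj)).1 h9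
  omega

lemma exists_isSeparatingPrime_three_left {j : ℕ} (hj : 2 ≤ j) (h : 3 * l = 3 ^ j + 3) :
    ∃ p, IsSeparatingPrime 3 l p := by
  have h9 : 3 ^ 2 ≤ 3 ^ j := Nat.pow_le_pow_right three_pos hj
  have hodd : Odd (3 ^ j) := Odd.pow (by decide)
  have hl : Even l := by
    rw [Nat.even_iff]
    rw [Nat.odd_iff] at hodd
    omega
  obtain ⟨p, hp, hpd⟩ := Nat.exists_prime_and_dvd (by omega : 3 * l - 5 ≠ 1)
  have hmod : 3 * l ≡ 5 [MOD p] := ((Nat.modEq_iff_dvd' (by omega)).2 hpd).symm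
  have hp2 : p ≠ 2 := by
    rintro rfl
    rw [Nat.odd_iff] at hodd
    omega
  have hp3 : p ≠ 3 := by
    rintro rfl
    omega
  refine ⟨p, isSeparatingPrime_of_modEq hp (hp.five_le_of_ne_two_of_ne_three hp2 hp3)
    (by decide) hmod (by norm_num) ?_ (by omega) ?_⟩
  · rwa [Nat.prime_dvd_prime_iff_eq hp Nat.prime_three]
  · exact fun hl5 ↦ absurd (hl.two_dvd.trans hl5) (by norm_num)

lemma exists_isSeparatingPrime_of_eq_three_pow_add_three {j : ℕ} (hj : 2 ≤ j) (hk : k ≠ 1)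
    (hl : l ≠ 1) (h : k * l = 3 ^ j + 3) : ∃ p, IsSeparatingPrime k l p := by
  by_cases hpow : ∃ a, k = 3 ^ a
  · obtain ⟨a, rfl⟩ := hpow
    have ha : a ≠ 0 := fun ha ↦ hk (by rw [ha, pow_zero])
    have ha3 := eq_three_of_three_pow_mul_eq ha hj h
    rw [ha3] at h ⊢
    exact exists_isSeparatingPrime_three_left hj h
  · push Not at hpow
    exact ⟨3, isSeparatingPrime_three_of_eq_three_pow_add_three (by omega) hpow hl h⟩

lemma exists_isSeparatingPrime_of_even (hk : k ≠ 1) (hl : l ≠ 1) (hn : 6 < k * l)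
    (heven : Even (k * l)) : ∃ p, IsSeparatingPrime k l p := by
  rcases eq_or_ne l 3 with rfl | hl3
  · have hk2 : Even k := (Nat.even_mul.1 heven).resolve_right (by decide)
    exact ⟨3, isSeparatingPrime_three_of_even (by omega) hk2⟩
  rw [Nat.even_iff] at heven
  rcases eq_pow_or_exists_prime_ne_dvd 3 (by omega : k * l - 3 ≠ 0) with
    ⟨j, hj⟩ | ⟨p, hp, hp3, hpd⟩
  · have hj2 : 2 ≤ j := by
      by_contra! hj2
      interval_cases j <;> omega
    exact exists_isSeparatingPrime_of_eq_three_pow_add_three hj2 hk hl (by omega)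
  · have hp2 : p ≠ 2 := by
      rintro rfl
      omega
    have hl_ndvd : ¬ l ∣ 3 := by
      rw [Nat.dvd_prime Nat.prime_three]
      tauto
    exact ⟨p, isSeparatingPrime_of_dvd_sub hp (hp.five_le_of_ne_two_of_ne_three hp2 hp3)
      (by decide) (by omega) hpd hk hl_ndvd⟩

lemma exists_isSeparatingPrime_of_eq_three_pow_add_four {j : ℕ} (hj : 2 ≤ j) (hk : k ≠ 1)
    (hl : l ≠ 1) (h : k * l = 3 ^ j + 4) : ∃ p, IsSeparatingPrime k l p := by
  obtain ⟨t, ht⟩ : 3 ∣ 3 ^ j := dvd_pow_self 3 (by omega)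
  rcases eq_pow_or_exists_prime_ne_dvd 2 (by omega : k * l - 3 ≠ 0) with
    ⟨c, hc⟩ | ⟨p, hp, hp2, hpd⟩
  · exact absurd (by omega) (three_pow_add_one_ne_two_pow hj c)
  · have hp3 : p ≠ 3 := by
      rintro rfl
      omega
    have hl3 : ¬ l ∣ 3 := fun hdvd ↦ by
      obtain rfl := ((Nat.dvd_prime Nat.prime_three).1 hdvd).resolve_left hl
      omega
    exact ⟨p, isSeparatingPrime_of_dvd_sub hp (hp.five_le_of_ne_two_of_ne_three hp2 hp3)
      (by decide) (by omega) hpd hk hl3⟩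

lemma exists_isSeparatingPrime_of_odd (hk : k ≠ 1) (hl : l ≠ 1) (hn : 7 < k * l)
    (hodd : Odd (k * l)) : ∃ p, IsSeparatingPrime k l p := by
  have hl2 : Odd l := (Nat.odd_mul.1 hodd).2
  rw [Nat.odd_iff] at hodd
  rcases eq_pow_or_exists_prime_ne_dvd 3 (by omega : k * l - 4 ≠ 0) with
    ⟨j, hj⟩ | ⟨p, hp, hp3, hpd⟩
  · have hj2 : 2 ≤ j := by
      by_contra! hj2
      interval_cases j <;> omega
    exact exists_isSeparatingPrime_of_eq_three_pow_add_four hj2 hk hl (by omega)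
  · have hp2 : p ≠ 2 := by
      rintro rfl
      omega
    have hl4 : ¬ l ∣ 4 := fun h ↦ hl <|
      Nat.Coprime.eq_one_of_dvd (hl2.coprime_two_right.pow_right 2) h
    exact ⟨p, isSeparatingPrime_of_dvd_sub hp (hp.five_le_of_ne_two_of_ne_three hp2 hp3)
      (by decide) (by omega) hpd hk hl4⟩

end SeparatingPrime

theorem exists_prime_strict_valuation_imprimitive_alternating
    (k l : ℕ) (hk : 2 ≤ k) (hl : 2 ≤ l) (n : ℕ) (hn : n = k * l) (hn6 : 6 < n) :
    ∃ p : ℕ, p.Prime ∧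
      ¬ (p : ℤ) ∣ ((numDerangements n : ℤ) + (-1) ^ (n - 1) * ((n : ℤ) - 1)) ∧
      padicValNat p ((Nat.factorial k) ^ l * Nat.factorial l) < padicValNat p (Nat.factorial n) := by
  subst hn
  rw [← twiceEvenDerangements_of_ne_zero (by omega)]
  rcases Nat.even_or_odd (k * l) with heven | hodd
  · exact exists_isSeparatingPrime_of_even (by omega) (by omega) hn6 heven
  · have hn7 : k * l ≠ 7 := fun h ↦ Nat.not_prime_mul (by omega) (by omega) (h ▸ Nat.prime_seven)
    exact exists_isSeparatingPrime_of_odd (by omega) (by omega) (by omega) hodd
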